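/- arXiv:2010.11933 — 2 statements merged into one kernel-verified Lean document; each statement's English description precedes it below -/
import Mathlib

section
/- Let r, ℓ ≥ 4 be integers and let J be a proper subgraph of K_r with at least 2 vertices (J ⊊ K_r, v(J) ≥ 2). Then β_{r,ℓ}(J) < 0. -/
open SimpleGraph

/-!
Write `M = m₂(K_r, C_ℓ)`, `v = v(J)` and `e = e(J)`. The exact value of `M` is not needed: the
bounds `0 < M < (r + 1) / 2` suffice. If `v = r`, properness of `J` gives `e < C(r,2)`, and
`M > 0` concludes. If `v < r`, then `e ≤ C(v,2)`, so
`C(r,2) - e ≥ (r - v)(r + v - 1) / 2 ≥ (r - v)(r + 1) / 2 > (r - v) M`.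

The bounds on `M` come from `0 < m₂(C_ℓ) ≤ 2` (`m2_cycle_pos`, `m2_cycle_le`): a cycle has maximum
degree two, so its subgraphs have at most as many edges as vertices. As `K_r` has finitely many
subgraphs, `M` is the value at some subgraph with `s ≤ r` vertices and at most `C(s,2)` edges
(`m2pair_bounds`), and `s (s - 1) < (r + 1) (s - 2 + 1/2)` for `2 ≤ s ≤ r`, `4 ≤ r`.
-/

/-- The 2-density `m₂(F)` of a finite graph `F`. -/
noncomputable def m2 {V : Type*} [Fintype V] (F : SimpleGraph V) : ℝ :=
  sSup {x : ℝ | ∃ J : F.Subgraph, 3 ≤ J.verts.ncard ∧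
    x = ((J.edgeSet.ncard : ℝ) - 1) / ((J.verts.ncard : ℝ) - 2)}

/-- The asymmetric 2-density `m₂(F, H)`. -/
noncomputable def m2pair {V W : Type*} [Fintype V] [Fintype W]
    (F : SimpleGraph V) (H : SimpleGraph W) : ℝ :=
  sSup {x : ℝ | ∃ J : F.Subgraph, 1 ≤ J.edgeSet.ncard ∧
    x = (J.edgeSet.ncard : ℝ) / ((J.verts.ncard : ℝ) - 2 + 1 / m2 H)}

/-- `β_{r,ℓ}(J) = r - v(J) - (C(r,2) - e(J)) / m₂(K_r, C_ℓ)`, where `C(r,2) = r(r-1)/2`. -/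
noncomputable def beta (r ℓ : ℕ) {V : Type*} {G : SimpleGraph V} (J : G.Subgraph) : ℝ :=
  (r : ℝ) - (J.verts.ncard : ℝ) -
    ((r : ℝ) * ((r : ℝ) - 1) / 2 - (J.edgeSet.ncard : ℝ)) /
      m2pair (⊤ : SimpleGraph (Fin r)) (cycleGraph ℓ)

lemma ncard_coe_edgeSet {V : Type*} {G : SimpleGraph V} (J : G.Subgraph) :
    J.coe.edgeSet.ncard = J.edgeSet.ncard := by
  rw [← Subgraph.image_coe_edgeSet_coe]
  exact (Set.ncard_image_of_injective _ (Sym2.map.injective Subtype.val_injective)).symm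

lemma two_mul_edges_le {V : Type*} [Fintype V] {G : SimpleGraph V} (J : G.Subgraph) :
    2 * (J.edgeSet.ncard : ℝ) ≤ (J.verts.ncard : ℝ) * ((J.verts.ncard : ℝ) - 1) := by
  classical
  have h := J.coe.card_edgeFinset_le_card_choose_two
  rw [← Set.ncard_coe_finset, coe_edgeFinset, ncard_coe_edgeSet, ← Nat.card_eq_fintype_card,
    Nat.card_coe_set_eq] at h
  have h' : (J.edgeSet.ncard : ℝ) ≤ ((J.verts.ncard.choose 2 : ℕ) : ℝ) := by exact_mod_cast h
  rw [Nat.cast_choose_two] at h'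
  linarith

/-- A subgraph of a graph of maximum degree at most two has at most as many edges as vertices. -/
lemma edges_le_verts {V : Type*} [Fintype V] {G : SimpleGraph V} [DecidableRel G.Adj]
    (hG : ∀ v, G.degree v ≤ 2) (J : G.Subgraph) :
    J.edgeSet.ncard ≤ J.verts.ncard := by
  classical
  have h := J.coe.sum_degrees_eq_twice_card_edges
  rw [← Set.ncard_coe_finset, coe_edgeFinset, ncard_coe_edgeSet] at h
  have h2 : 2 * J.edgeSet.ncard ≤ ∑ _v : J.verts, 2 := by
    rw [← h]
    refine Finset.sum_le_sum fun v _ => ?_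
    rw [Subgraph.coe_degree]
    exact (J.degree_le _).trans (hG _)
  rw [Finset.sum_const, Finset.card_univ, ← Nat.card_eq_fintype_card, Nat.card_coe_set_eq,
    smul_eq_mul] at h2
  omega

lemma cycle_degree (ℓ : ℕ) (hℓ : 4 ≤ ℓ) (v : Fin ℓ) : (cycleGraph ℓ).degree v = 2 := by
  obtain ⟨n, rfl⟩ : ∃ n, ℓ = n + 3 := ⟨ℓ - 3, by omega⟩
  exact cycleGraph_degree_three_le

lemma cycle_edges (ℓ : ℕ) (hℓ : 4 ≤ ℓ) : (cycleGraph ℓ).edgeSet.ncard = ℓ := by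
  classical
  have h := (cycleGraph ℓ).sum_degrees_eq_twice_card_edges
  rw [← Set.ncard_coe_finset, coe_edgeFinset] at h
  simp only [cycle_degree ℓ hℓ, Finset.sum_const, Finset.card_univ, Fintype.card_fin,
    smul_eq_mul] at h
  omega

lemma m2_cycle_le (ℓ : ℕ) (hℓ : 4 ≤ ℓ) : m2 (cycleGraph ℓ) ≤ 2 := by
  refine Real.sSup_le ?_ (by norm_num)
  rintro x ⟨J, hJ, rfl⟩
  have h := edges_le_verts (fun v => (cycle_degree ℓ hℓ v).le) J
  have h1 : (J.edgeSet.ncard : ℝ) ≤ J.verts.ncard := by exact_mod_cast h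
  have h2 : (3 : ℝ) ≤ J.verts.ncard := by exact_mod_cast hJ
  rw [div_le_iff₀ (by linarith)]
  linarith

lemma m2_cycle_pos (ℓ : ℕ) (hℓ : 4 ≤ ℓ) : 0 < m2 (cycleGraph ℓ) := by
  have hfin : {x : ℝ | ∃ J : (cycleGraph ℓ).Subgraph, 3 ≤ J.verts.ncard ∧
      x = ((J.edgeSet.ncard : ℝ) - 1) / ((J.verts.ncard : ℝ) - 2)}.Finite :=
    (Set.finite_range fun J : (cycleGraph ℓ).Subgraph =>
      ((J.edgeSet.ncard : ℝ) - 1) / ((J.verts.ncard : ℝ) - 2)).subset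
      (by rintro x ⟨J, -, rfl⟩; exact ⟨J, rfl⟩)
  have hv : (⊤ : (cycleGraph ℓ).Subgraph).verts.ncard = ℓ := by simp [Set.ncard_univ]
  have hl : (4 : ℝ) ≤ ℓ := by exact_mod_cast hℓ
  refine lt_of_lt_of_le ?_ (le_csSup hfin.bddAbove ⟨⊤, by omega, rfl⟩)
  rw [hv, Subgraph.edgeSet_top, cycle_edges ℓ hℓ]
  apply div_pos <;> linarith

lemma top_edges (r : ℕ) :
    ((⊤ : SimpleGraph (Fin r)).edgeSet.ncard : ℝ) = (r : ℝ) * ((r : ℝ) - 1) / 2 := by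
  classical
  rw [← coe_edgeFinset, Set.ncard_coe_finset, card_edgeFinset_top_eq_card_choose_two,
    Fintype.card_fin, Nat.cast_choose_two]

lemma verts_ncard_le {r : ℕ} (J : (⊤ : SimpleGraph (Fin r)).Subgraph) : J.verts.ncard ≤ r := by
  simpa using Set.ncard_le_card J.verts

lemma m2pair_bounds (r ℓ : ℕ) (hr : 4 ≤ r) (hℓ : 4 ≤ ℓ) :
    0 < m2pair (⊤ : SimpleGraph (Fin r)) (cycleGraph ℓ) ∧
      m2pair (⊤ : SimpleGraph (Fin r)) (cycleGraph ℓ) < ((r : ℝ) + 1) / 2 := by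
  have hR : (4 : ℝ) ≤ r := by exact_mod_cast hr
  have hc : (1 : ℝ) / 2 ≤ 1 / m2 (cycleGraph ℓ) :=
    one_div_le_one_div_of_le (m2_cycle_pos ℓ hℓ) (m2_cycle_le ℓ hℓ)
  unfold m2pair
  generalize 1 / m2 (cycleGraph ℓ) = c at hc
  have hfin : {x : ℝ | ∃ J : (⊤ : SimpleGraph (Fin r)).Subgraph, 1 ≤ J.edgeSet.ncard ∧
      x = (J.edgeSet.ncard : ℝ) / ((J.verts.ncard : ℝ) - 2 + c)}.Finite :=
    (Set.finite_range fun J : (⊤ : SimpleGraph (Fin r)).Subgraph =>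
      (J.edgeSet.ncard : ℝ) / ((J.verts.ncard : ℝ) - 2 + c)).subset
      (by rintro x ⟨J, -, rfl⟩; exact ⟨J, rfl⟩)
  have hne : {x : ℝ | ∃ J : (⊤ : SimpleGraph (Fin r)).Subgraph, 1 ≤ J.edgeSet.ncard ∧
      x = (J.edgeSet.ncard : ℝ) / ((J.verts.ncard : ℝ) - 2 + c)}.Nonempty := by
    refine ⟨_, ⊤, ?_, rfl⟩
    have h := top_edges r
    rw [Subgraph.edgeSet_top]
    have : (1 : ℝ) ≤ ((⊤ : SimpleGraph (Fin r)).edgeSet.ncard : ℝ) := by rw [h]; nlinarith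
    exact_mod_cast this
  obtain ⟨J, he, hx⟩ := hne.csSup_mem hfin
  rw [hx]
  have hE := two_mul_edges_le J
  have he' : (1 : ℝ) ≤ J.edgeSet.ncard := by exact_mod_cast he
  have hsr : (J.verts.ncard : ℝ) ≤ r := by exact_mod_cast verts_ncard_le J
  -- A subgraph with an edge has at least two vertices.
  have hs : 2 ≤ J.verts.ncard := by
    by_contra hlt
    have : J.verts.ncard = 0 ∨ J.verts.ncard = 1 := by omega
    rcases this with h | h <;> rw [h] at hE <;> norm_num at hE <;> linarith
  have hs' : (2 : ℝ) ≤ J.verts.ncard := by exact_mod_cast hs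
  refine ⟨div_pos (by linarith) (by linarith), ?_⟩
  rw [div_lt_iff₀ (by linarith)]
  generalize (J.verts.ncard : ℝ) = s at *
  have h1 : ((r : ℝ) + 1) * (s - 2 + 1 / 2) ≤ (r + 1) * (s - 2 + c) := by gcongr
  -- For `s ≤ 3` the bound `r ≥ 4` is used, for `s ≥ 3` the bound `r ≥ s`.
  have h2 : s * (s - 1) < ((r : ℝ) + 1) * (s - 2 + 1 / 2) := by
    rcases le_total s 3 with h | h <;> nlinarith
  linarith

/-- **Lemma.** Let `r, ℓ ≥ 4` and let `J` be a proper subgraph of `K_r` with at least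
two vertices. Then `β_{r,ℓ}(J) < 0`. -/
theorem beta_neg (r ℓ : ℕ) (hr : 4 ≤ r) (hℓ : 4 ≤ ℓ)
    (J : (⊤ : SimpleGraph (Fin r)).Subgraph) (hJ : J ≠ ⊤) (hv : 2 ≤ J.verts.ncard) :
    beta r ℓ J < 0 := by
  obtain ⟨hM0, hM⟩ := m2pair_bounds r ℓ hr hℓ
  unfold beta
  rw [sub_neg, lt_div_iff₀ hM0]
  generalize m2pair (⊤ : SimpleGraph (Fin r)) (cycleGraph ℓ) = M at *
  rcases (verts_ncard_le J).lt_or_eq with hlt | heq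
  · have hE := two_mul_edges_le J
    have hv' : (2 : ℝ) ≤ J.verts.ncard := by exact_mod_cast hv
    have hlt' : (J.verts.ncard : ℝ) < r := by exact_mod_cast hlt
    have h := mul_lt_mul_of_pos_left hM (sub_pos.2 hlt')
    nlinarith
  · rw [heq, sub_self, zero_mul, sub_pos, ← top_edges]
    by_contra hle
    have hle' : (⊤ : SimpleGraph (Fin r)).edgeSet.ncard ≤ J.edgeSet.ncard := by
      exact_mod_cast not_lt.1 hle
    have hedge := Set.eq_of_subset_of_ncard_le J.edgeSet_subset hle' (Set.toFinite _)
    have hverts : J.verts = Set.univ :=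
      Set.eq_of_subset_of_ncard_le (Set.subset_univ _) (by simp [Set.ncard_univ, heq])
        (Set.toFinite _)
    refine hJ (Subgraph.ext (by simp [hverts]) ?_)
    ext a b
    rw [← Subgraph.mem_edgeSet, hedge, mem_edgeSet, Subgraph.top_adj]
end

section
/- Let r, ℓ ≥ 4 be integers and let J be a proper subgraph of K_r with at least 2 vertices such that some vertex v ∈ V(J) has degree exactly 1 in J. Then β_{r,ℓ}(J) ≤ β_{r,ℓ}(K₂), with equality if and only if J is isomorphic to K₂. -/
/-!
Write `m = m₂(K_r, C_ℓ)`, `v = v(J)` and `e = e(J)`. Then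
`β(J) - β(K₂) = (e - 1) / m - (v - 2)`, so the claim is `e - 1 ≤ m (v - 2)`, with equality exactly
for `J ≅ K₂`. All edges of `J` but one avoid a vertex of degree one, so
`e - 1 ≤ C(v - 1, 2) = (v - 1)(v - 2) / 2` (`ncard_edgeSet_le_of_pendant`).
Testing `m₂(C_ℓ)` on the whole cycle gives `m₂(C_ℓ) > 1`, and testing `m₂(K_r, C_ℓ)` on the whole
of `K_r` then gives `m > (r - 1) / 2 ≥ (v - 1) / 2` (`lt_m2pair_top_cycleGraph`). Hence the
inequality is strict for `v ≥ 3`, while for `v = 2` the graph `J` is a single edge and equality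
holds.
-/

open SimpleGraph

/-- `β_{r,ℓ}(K₂)`, i.e. `β_{r,ℓ}` evaluated on a single edge (`v = 2`, `e = 1`). -/
noncomputable def betaK2 (r ℓ : ℕ) : ℝ :=
  (r : ℝ) - 2 -
    ((r : ℝ) * ((r : ℝ) - 1) / 2 - 1) /
      m2pair (⊤ : SimpleGraph (Fin r)) (cycleGraph ℓ)

/-- The whole cycle witnesses `m₂(C_ℓ) ≥ (ℓ - 1) / (ℓ - 2) > 1`. -/
lemma one_lt_m2_cycleGraph (ℓ : ℕ) (hℓ : 4 ≤ ℓ) : 1 < m2 (cycleGraph ℓ) := by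
  have hcard : (cycleGraph ℓ).edgeSet.ncard = ℓ := by
    classical
    obtain ⟨n, rfl⟩ : ∃ n, ℓ = n + 3 := ⟨ℓ - 3, by omega⟩
    have h := sum_degrees_eq_twice_card_edges (cycleGraph (n + 3))
    simp only [cycleGraph_degree_three_le, Finset.sum_const, Finset.card_univ, Fintype.card_fin,
      smul_eq_mul] at h
    rw [← coe_edgeFinset, Set.ncard_coe_finset]
    omega
  have hbdd : BddAbove {x : ℝ | ∃ J : (cycleGraph ℓ).Subgraph, 3 ≤ J.verts.ncard ∧
      x = ((J.edgeSet.ncard : ℝ) - 1) / ((J.verts.ncard : ℝ) - 2)} := by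
    refine ((Set.finite_range fun J : (cycleGraph ℓ).Subgraph =>
      ((J.edgeSet.ncard : ℝ) - 1) / ((J.verts.ncard : ℝ) - 2)).subset ?_).bddAbove
    rintro x ⟨J, -, rfl⟩
    exact ⟨J, rfl⟩
  have hverts : (⊤ : (cycleGraph ℓ).Subgraph).verts.ncard = ℓ := by
    simp [Set.ncard_univ]
  have hℓ' : (4 : ℝ) ≤ ℓ := by exact_mod_cast hℓ
  refine lt_of_lt_of_le ?_ (le_csSup hbdd ⟨⊤, by omega, rfl⟩)
  rw [Subgraph.edgeSet_top, hcard, hverts, lt_div_iff₀ (by linarith)]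
  linarith

/-- The graph `K_r` itself witnesses `m₂(K_r, C_ℓ) ≥ C(r,2) / (r - 2 + 1 / m₂(C_ℓ))`, and the
denominator is less than `r`. -/
lemma lt_m2pair_top_cycleGraph (r ℓ : ℕ) (hr : 4 ≤ r) (hℓ : 4 ≤ ℓ) :
    ((r : ℝ) - 1) / 2 < m2pair (⊤ : SimpleGraph (Fin r)) (cycleGraph ℓ) := by
  have hm := one_lt_m2_cycleGraph ℓ hℓ
  have hcard : (⊤ : SimpleGraph (Fin r)).edgeSet.ncard = r.choose 2 := by
    classical
    rw [← coe_edgeFinset, Set.ncard_coe_finset, card_edgeFinset_top_eq_card_choose_two,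
      Fintype.card_fin]
  have hbdd : BddAbove {x : ℝ | ∃ J : (⊤ : SimpleGraph (Fin r)).Subgraph,
      1 ≤ J.edgeSet.ncard ∧ x = (J.edgeSet.ncard : ℝ) /
        ((J.verts.ncard : ℝ) - 2 + 1 / m2 (cycleGraph ℓ))} := by
    refine ((Set.finite_range fun J : (⊤ : SimpleGraph (Fin r)).Subgraph =>
      (J.edgeSet.ncard : ℝ) /
        ((J.verts.ncard : ℝ) - 2 + 1 / m2 (cycleGraph ℓ))).subset ?_).bddAbove
    rintro x ⟨J, -, rfl⟩
    exact ⟨J, rfl⟩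
  have hverts : (⊤ : (⊤ : SimpleGraph (Fin r)).Subgraph).verts.ncard = r := by
    simp [Set.ncard_univ]
  have hr' : (4 : ℝ) ≤ r := by exact_mod_cast hr
  have hinv_pos : 0 < 1 / m2 (cycleGraph ℓ) := by positivity
  have hinv_lt : 1 / m2 (cycleGraph ℓ) < 1 := by
    rw [div_lt_one (by linarith)]
    exact hm
  have hpos : 1 ≤ r.choose 2 := Nat.choose_pos (by omega)
  refine lt_of_lt_of_le ?_ (le_csSup hbdd ⟨⊤, by rw [Subgraph.edgeSet_top, hcard]; exact hpos, rfl⟩)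
  rw [Subgraph.edgeSet_top, hcard, hverts, lt_div_iff₀ (by linarith), Nat.cast_choose_two]
  nlinarith

/-- If `v` is a vertex of degree one, then all edges of `J` but the one at `v` are pairs of
vertices of `J` other than `v`. -/
lemma ncard_edgeSet_le_of_pendant {V : Type*} [Finite V] {G : SimpleGraph V} (J : G.Subgraph)
    {v w : V} (hv : v ∈ J.verts) (hw : J.neighborSet v = {w}) :
    J.edgeSet.ncard ≤ (J.verts.ncard - 1).choose 2 + 1 := by
  classical
  have hfin : (J.verts \ {v}).Finite := Set.toFinite _
  set S : Finset V := hfin.toFinset with hS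
  have hScard : S.card = J.verts.ncard - 1 := by
    rw [← Set.ncard_eq_toFinset_card _ hfin, Set.ncard_sdiff_singleton_of_mem hv]
  have hadj : ∀ x, J.Adj v x → x = w := fun x hx => by
    have : x ∈ J.neighborSet v := hx
    rwa [hw] at this
  have hsub : J.edgeSet ⊆
      ((insert s(v, w) (S.offDiag.image Sym2.mk.uncurry) : Finset (Sym2 V)) : Set (Sym2 V)) := by
    intro e he
    induction e with
    | _ a b =>
      rw [Subgraph.mem_edgeSet] at he
      rw [Finset.mem_coe, Finset.mem_insert]
      by_cases ha : a = v
      · subst ha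
        exact Or.inl (by rw [hadj b he])
      by_cases hb : b = v
      · subst hb
        exact Or.inl (by rw [hadj a he.symm, Sym2.eq_swap])
      refine Or.inr (Finset.mem_image.2 ⟨(a, b), ?_, rfl⟩)
      simp [hS, ha, hb, he.fst_mem, he.snd_mem, he.ne]
  calc J.edgeSet.ncard
      ≤ (insert s(v, w) (S.offDiag.image Sym2.mk.uncurry) : Finset (Sym2 V)).card := by
        rw [← Set.ncard_coe_finset]
        exact Set.ncard_le_ncard hsub (Finset.finite_toSet _)
    _ ≤ (S.offDiag.image Sym2.mk.uncurry).card + 1 := Finset.card_insert_le _ _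
    _ = (J.verts.ncard - 1).choose 2 + 1 := by rw [Sym2.card_image_offDiag, hScard]

/-- A two-vertex graph with an edge is isomorphic to `K₂`. -/
lemma nonempty_iso_K2 {V : Type*} {G : SimpleGraph V} (J : G.Subgraph)
    {v w : V} (hvw : J.Adj v w) (hcard : J.verts.ncard = 2) :
    Nonempty (J.coe ≃g (⊤ : SimpleGraph (Fin 2))) := by
  have hfin : J.verts.Finite := Set.finite_of_ncard_pos (by omega)
  have hverts : J.verts = {v, w} := by
    refine (Set.eq_of_subset_of_ncard_le ?_ ?_ hfin).symm
    · rintro x (rfl | rfl)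
      exacts [hvw.fst_mem, hvw.snd_mem]
    · rw [Set.ncard_pair hvw.ne, hcard]
  have htop : J.coe = ⊤ := by
    ext ⟨a, ha⟩ ⟨b, hb⟩
    rw [hverts] at ha hb
    simp only [Subgraph.coe_adj, top_adj, ne_eq, Subtype.mk.injEq]
    refine ⟨fun h => h.ne, fun h => ?_⟩
    rcases ha with rfl | rfl <;> rcases hb with rfl | rfl
    exacts [(h rfl).elim, hvw, hvw.symm, (h rfl).elim]
  have : Finite J.verts := hfin
  rw [htop]
  exact ⟨Iso.completeGraph (Finite.equivFinOfCardEq (by rw [Nat.card_coe_set_eq, hcard]))⟩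

/-- **Lemma.** Let `r, ℓ ≥ 4` and let `J` be a proper subgraph of `K_r` with at least
two vertices such that some vertex of `J` has degree exactly `1` in `J`. Then
`β_{r,ℓ}(J) ≤ β_{r,ℓ}(K₂)`, with equality if and only if `J ≅ K₂`. -/
theorem beta_le_betaK2 (r ℓ : ℕ) (hr : 4 ≤ r) (hℓ : 4 ≤ ℓ)
    (J : (⊤ : SimpleGraph (Fin r)).Subgraph) (hJ : J ≠ ⊤) (hv : 2 ≤ J.verts.ncard)
    (hdeg : ∃ v ∈ J.verts, (J.neighborSet v).ncard = 1) :
    beta r ℓ J ≤ betaK2 r ℓ ∧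
    (beta r ℓ J = betaK2 r ℓ ↔ Nonempty (J.coe ≃g (⊤ : SimpleGraph (Fin 2)))) := by
  obtain ⟨v, hvJ, hdeg⟩ := hdeg
  obtain ⟨w, hw⟩ := Set.ncard_eq_one.1 hdeg
  have hvw : J.Adj v w := by
    have : w ∈ J.neighborSet v := by rw [hw]; rfl
    exact this
  have hm := lt_m2pair_top_cycleGraph r ℓ hr hℓ
  have hedge := ncard_edgeSet_le_of_pendant J hvJ hw
  have hle : J.verts.ncard ≤ r := by
    simpa using Set.ncard_le_card J.verts
  unfold beta betaK2
  set m := m2pair (⊤ : SimpleGraph (Fin r)) (cycleGraph ℓ)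
  have hr' : (4 : ℝ) ≤ r := by exact_mod_cast hr
  have hmpos : 0 < m := by linarith
  rcases hv.eq_or_lt with h2 | h3
  · -- Two vertices: `J` is a single edge.
    have hone : J.edgeSet.ncard = 1 := by
      have hpos : 0 < J.edgeSet.ncard :=
        (Set.ncard_pos (Set.toFinite _)).2 ⟨s(v, w), hvw⟩
      rw [← h2, show Nat.choose (2 - 1) 2 = 0 from rfl] at hedge
      omega
    have heq : (r : ℝ) - (J.verts.ncard : ℝ) -
        ((r : ℝ) * ((r : ℝ) - 1) / 2 - (J.edgeSet.ncard : ℝ)) / m =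
        (r : ℝ) - 2 - ((r : ℝ) * ((r : ℝ) - 1) / 2 - 1) / m := by
      rw [hone, ← h2]
      norm_num
    exact ⟨heq.le, fun _ => nonempty_iso_K2 J hvw h2.symm, fun _ => heq⟩
  · -- At least three vertices: the inequality is strict and `J` is too large to be `K₂`.
    have hlt : (r : ℝ) - (J.verts.ncard : ℝ) -
        ((r : ℝ) * ((r : ℝ) - 1) / 2 - (J.edgeSet.ncard : ℝ)) / m <
        (r : ℝ) - 2 - ((r : ℝ) * ((r : ℝ) - 1) / 2 - 1) / m := by
      have hedge' : (J.edgeSet.ncard : ℝ) ≤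
          ((J.verts.ncard : ℝ) - 1) * ((J.verts.ncard : ℝ) - 2) / 2 + 1 := by
        have h : (J.edgeSet.ncard : ℝ) ≤ ((J.verts.ncard - 1).choose 2 : ℕ) + 1 := by
          exact_mod_cast hedge
        rw [Nat.cast_choose_two, Nat.cast_sub (by omega)] at h
        push_cast at h
        linarith
      have hle' : (J.verts.ncard : ℝ) ≤ r := by exact_mod_cast hle
      have h3' : (2 : ℝ) < J.verts.ncard := by exact_mod_cast h3
      have hkey : ((J.edgeSet.ncard : ℝ) - 1) / m < (J.verts.ncard : ℝ) - 2 := by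
        rw [div_lt_iff₀ hmpos]
        nlinarith
      have hsplit : ((r : ℝ) * ((r : ℝ) - 1) / 2 - (J.edgeSet.ncard : ℝ)) / m =
          ((r : ℝ) * ((r : ℝ) - 1) / 2 - 1) / m - ((J.edgeSet.ncard : ℝ) - 1) / m := by
        ring
      linarith
    refine ⟨hlt.le, fun h => (hlt.ne h).elim, fun ⟨f⟩ => ?_⟩
    have hcard := Nat.card_congr f.toEquiv
    rw [Nat.card_coe_set_eq, Nat.card_eq_fintype_card, Fintype.card_fin] at hcard
    omega
end
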